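/- arXiv:2403.00693 — 2 statements merged into one kernel-verified Lean document; each statement's English description precedes it below -/
import Mathlib

section
/- There exists a real number a ∈ (0, 1/7) such that the iterated function system 𝒮₁(a) = {x/7, x/7 + a, x/7 + 6/7} on ℝ satisfies the weak separation property and the open set condition, but satisfies neither the convex open set condition nor the convex finite type condition. -/
open Set

/-- The IFS 𝒮₁(a) = {x/7, x/7 + a, x/7 + 6/7} on ℝ. -/
noncomputable def S1 (a : ℝ) : Fin 3 → ℝ → ℝ :=
  ![fun x => x / 7, fun x => x / 7 + a, fun x => x / 7 + 6 / 7]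

/-- For a word σ = (s₁,…,s_k), the composition S_σ = S_{s₁} ∘ ⋯ ∘ S_{s_k}. -/
noncomputable def Sw1 (a : ℝ) : List (Fin 3) → ℝ → ℝ
  | [] => id
  | i :: σ => S1 a i ∘ Sw1 a σ

/-- For words σ, τ of the same length k, S_σ⁻¹ ∘ S_τ is the translation by
`amt1 a σ τ = 7 ^ k * (S_τ(0) − S_σ(0))`. -/
noncomputable def amt1 (a : ℝ) (σ τ : List (Fin 3)) : ℝ :=
  7 ^ σ.length * (Sw1 a τ 0 - Sw1 a σ 0)

/-- The weak separation property for 𝒮₁(a): the nonzero translation amounts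
`a_{σ,τ}` over pairs of words of equal length are bounded away from 0. -/
def WSP1 (a : ℝ) : Prop :=
  ∃ ε > 0, ∀ σ τ : List (Fin 3), σ.length = τ.length →
    amt1 a σ τ ≠ 0 → ε ≤ |amt1 a σ τ|

/-- The neighbourhood type of a word σ relative to the open interval (0,1). -/
noncomputable def Ntype1 (a : ℝ) (σ : List (Fin 3)) : Set ℝ :=
  { t | ∃ τ : List (Fin 3), τ.length = σ.length ∧
      (Sw1 a σ '' Ioo 0 1 ∩ Sw1 a τ '' Ioo 0 1).Nonempty ∧ t = amt1 a σ τ }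

/-- The convex finite type condition: only finitely many neighbourhood types
relative to (0,1). -/
def FTCco1 (a : ℝ) : Prop := (Set.range (Ntype1 a)).Finite

/-- The open set condition for 𝒮₁(a). -/
def OSC1 (a : ℝ) : Prop :=
  ∃ V : Set ℝ, V.Nonempty ∧ IsOpen V ∧ (∀ i, S1 a i '' V ⊆ V) ∧
    ∀ i j, i ≠ j → S1 a i '' V ∩ S1 a j '' V = ∅

/-- The convex open set condition for 𝒮₁(a): OSC with V = (0,1). -/
def OSCco1 (a : ℝ) : Prop :=
  (∀ i, S1 a i '' Ioo 0 1 ⊆ Ioo 0 1) ∧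
    ∀ i j, i ≠ j → S1 a i '' Ioo 0 1 ∩ S1 a j '' Ioo 0 1 = ∅

/-- digits of the IFS with `a = b / 7` -/
noncomputable def dg (b : ℝ) : Fin 3 → ℝ := ![0, b, 6]

/-- the orbit data -/
def GoodSeq (b : ℝ) (t : ℕ → ℝ) : Prop :=
  t 0 = b ∧ 5 / 8 ≤ b ∧ b ≤ 37 / 55 ∧ ∀ n,
    (1 - b / 7 ≤ t n ∧ t (n+1) = 7 * t n - 6) ∨
    ((5 - b) / 7 ≤ t n ∧ t n ≤ 5 / 7 ∧ t (n+1) = 7 * t n - 6 + b) ∨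
    (t n ≤ -(1 - b / 7) ∧ t (n+1) = 7 * t n + 6) ∨
    (t n ≤ -((5 - b) / 7) ∧ - (5 / 7) ≤ t n ∧ t (n+1) = 7 * t n + 6 - b)

lemma S1_eq (b : ℝ) (i : Fin 3) (x : ℝ) : S1 (b / 7) i x = (x + dg b i) / 7 := by
  fin_cases i <;> simp [S1, dg] <;> ring

lemma dg_mem (b : ℝ) (h0 : 0 ≤ b) (h1 : b ≤ 1) (i : Fin 3) : 0 ≤ dg b i ∧ dg b i ≤ 6 := by
  fin_cases i <;> simp [dg] <;> (try constructor) <;> linarith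

lemma step {b : ℝ} {t : ℕ → ℝ} (h : GoodSeq b t) (n : ℕ) (i j : Fin 3) :
    7 * t n + (dg b j - dg b i) = t (n+1) ∨ 1 ≤ |7 * t n + (dg b j - dg b i)| := by
  obtain ⟨_, h1, h2, h⟩ := h
  rw [le_abs]
  rcases h n with h | h | h | h <;> fin_cases i <;> fin_cases j <;>
  simp only [dg, Fin.zero_eta, Fin.mk_one, Fin.reduceFinMk, Matrix.cons_val_zero,
    Matrix.cons_val_one, Matrix.cons_val] <;>
  first
  | (left; linarith)
  | (right; left; linarith)
  | (right; right; linarith)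

lemma GoodSeq.abs_ge {b : ℝ} {t : ℕ → ℝ} (h : GoodSeq b t) (n : ℕ) : 3 / 5 ≤ |t n| := by
  obtain ⟨_, h1, h2, h⟩ := h
  rw [le_abs]
  rcases h n with h | h | h | h
  · left; linarith
  · left; linarith
  · right; linarith
  · right; linarith

lemma first_step {b : ℝ} {t : ℕ → ℝ} (h : GoodSeq b t) (i j : Fin 3) (hij : i ≠ j) :
    dg b j - dg b i = t 0 ∨ dg b j - dg b i = - t 0 ∨ 1 ≤ |dg b j - dg b i| := by
  obtain ⟨h0, h1, h2, -⟩ := h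
  rw [le_abs, h0]
  fin_cases i <;> fin_cases j <;> simp at hij <;>
  simp only [dg, Fin.zero_eta, Fin.mk_one, Fin.reduceFinMk, Matrix.cons_val_zero,
    Matrix.cons_val_one, Matrix.cons_val] <;>
  first
  | (left; linarith)
  | (right; left; linarith)
  | (right; right; left; linarith)
  | (right; right; right; linarith)

/-! words -/

/-- scaled left endpoint -/
noncomputable def Nw (b : ℝ) (σ : List (Fin 3)) : ℝ := 7 ^ σ.length * Sw1 (b / 7) σ 0

lemma Nw_nil (b : ℝ) : Nw b [] = 0 := by simp [Nw, Sw1]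

lemma Nw_cons (b : ℝ) (i : Fin 3) (σ : List (Fin 3)) :
    Nw b (i :: σ) = 7 ^ σ.length * dg b i + Nw b σ := by
  simp only [Nw, Sw1, Function.comp, S1_eq, List.length_cons, pow_succ]
  ring

lemma Sw1_apply (b : ℝ) (σ : List (Fin 3)) (x : ℝ) :
    7 ^ σ.length * Sw1 (b / 7) σ x = Nw b σ + x := by
  induction σ with
  | nil => simp [Nw, Sw1]
  | cons i σ ih =>
    rw [Nw_cons, add_assoc, ← ih]
    simp only [Sw1, Function.comp, S1_eq, List.length_cons, pow_succ]
    ring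

lemma Nw_snoc (b : ℝ) (σ : List (Fin 3)) (i : Fin 3) :
    Nw b (σ ++ [i]) = 7 * Nw b σ + dg b i := by
  induction σ with
  | nil => simp [Nw_nil, Nw_cons]
  | cons j σ ih =>
    rw [List.cons_append, Nw_cons, ih, Nw_cons]
    simp only [List.length_append, List.length_singleton, pow_succ]
    ring

lemma amt_eq (b : ℝ) (σ τ : List (Fin 3)) (h : σ.length = τ.length) :
    amt1 (b / 7) σ τ = Nw b τ - Nw b σ := by
  simp only [amt1, Nw, h]; ring

lemma Nw_bd (b : ℝ) (h0 : 0 ≤ b) (h1 : b ≤ 1) (σ : List (Fin 3)) :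
    0 ≤ Nw b σ ∧ Nw b σ ≤ 7 ^ σ.length - 1 := by
  induction σ with
  | nil => simp [Nw_nil]
  | cons i σ ih =>
    obtain ⟨h2, h3⟩ := dg_mem b h0 h1 i
    have h7 : (0 : ℝ) < 7 ^ σ.length := by positivity
    rw [Nw_cons, List.length_cons, pow_succ]
    constructor
    · have := mul_nonneg h7.le h2; linarith [ih.1]
    · have := mul_le_mul_of_nonneg_left h3 h7.le; linarith [ih.2]

lemma far {b : ℝ} (h0 : 0 ≤ b) (h1 : b ≤ 1) (σ τ : List (Fin 3)) (h : σ.length = τ.length)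
    (c : ℝ) (hc : 1 ≤ |c|) : 3 / 5 ≤ |Nw b τ - Nw b σ + 7 ^ σ.length * c| := by
  have hs := Nw_bd b h0 h1 σ
  have ht := Nw_bd b h0 h1 τ
  rw [← h] at ht
  have h7 : (0 : ℝ) < 7 ^ σ.length := by positivity
  rw [le_abs] at hc ⊢
  rcases hc with hc | hc
  · left; have := mul_le_mul_of_nonneg_left hc h7.le; linarith [hs.2, ht.1]
  · right; have := mul_le_mul_of_nonneg_left hc h7.le; linarith [hs.1, ht.2]

lemma near {b : ℝ} {t : ℕ → ℝ} (hg : GoodSeq b t) (σ : List (Fin 3)) :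
    ∀ (τ : List (Fin 3)) (_ : σ.length = τ.length) (n : ℕ),
      3 / 5 ≤ |Nw b τ - Nw b σ + 7 ^ σ.length * t n| := by
  have h0 : 0 ≤ b := by linarith [hg.2.1]
  have h1 : b ≤ 1 := by linarith [hg.2.2.1]
  induction σ with
  | nil =>
    intro τ h n
    obtain rfl : τ = [] := by simpa using h.symm
    simpa [Nw_nil] using hg.abs_ge n
  | cons i σ ih =>
    intro τ h n
    cases τ with
    | nil => simp at h
    | cons j τ =>
      have h : σ.length = τ.length := by simpa using h
      have e : Nw b (j :: τ) - Nw b (i :: σ) + 7 ^ (i :: σ).length * t n =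
          Nw b τ - Nw b σ + 7 ^ σ.length * (7 * t n + (dg b j - dg b i)) := by
        rw [Nw_cons, Nw_cons, List.length_cons, pow_succ, h]; ring
      rw [e]
      rcases step hg n i j with h' | h'
      · rw [h']; exact ih τ h (n+1)
      · exact far h0 h1 σ τ h _ h'

lemma wsp {b : ℝ} {t : ℕ → ℝ} (hg : GoodSeq b t) : WSP1 (b / 7) := by
  have h0 : 0 ≤ b := by linarith [hg.2.1]
  have h1 : b ≤ 1 := by linarith [hg.2.2.1]
  refine ⟨3 / 5, by norm_num, ?_⟩
  intro σ
  induction σ with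
  | nil =>
    intro τ h hne
    obtain rfl : τ = [] := by simpa using h.symm
    simp [amt1] at hne
  | cons i σ ih =>
    intro τ h hne
    rw [amt_eq _ _ _ h] at hne ⊢
    cases τ with
    | nil => simp at h
    | cons j τ =>
      have hl : σ.length = τ.length := by simpa using h
      have e : Nw b (j :: τ) - Nw b (i :: σ) =
          Nw b τ - Nw b σ + 7 ^ σ.length * (dg b j - dg b i) := by
        rw [Nw_cons, Nw_cons, hl]; ring
      rw [e] at hne ⊢
      by_cases hij : i = j
      · subst hij
        simp only [sub_self, mul_zero, add_zero] at hne ⊢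
        have := ih τ hl
        rw [amt_eq _ _ _ hl] at this
        exact this hne
      · rcases first_step hg i j hij with h' | h' | h'
        · rw [h']; exact near hg σ τ hl 0
        · rw [h', ← abs_neg]
          have := near hg τ σ hl.symm 0
          rw [← hl] at this
          convert this using 2
          ring
        · exact far h0 h1 σ τ hl _ h'

/-- The open set. -/
inductive VV (b : ℝ) : ℝ → Prop
  | base (x : ℝ) (h1 : 2 / 5 < x) (h2 : x < 1 / 2) : VV b x
  | step (i : Fin 3) (x : ℝ) (h : VV b x) : VV b ((x + dg b i) / 7)

lemma VV_mem {b : ℝ} (h0 : 0 ≤ b) (h1 : b ≤ 1) {x : ℝ} (h : VV b x) : 0 < x ∧ x < 1 := by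
  induction h with
  | base x h1 h2 => constructor <;> linarith
  | step i x h ih =>
    have := dg_mem b h0 h1 i
    constructor <;> linarith [ih.1, ih.2, this.1, this.2]

lemma VV_open (b : ℝ) : IsOpen {x | VV b x} := by
  rw [isOpen_iff_mem_nhds]
  intro x hx
  induction hx with
  | base x h1 h2 =>
    filter_upwards [Ioo_mem_nhds h1 h2] with y hy
    exact VV.base y hy.1 hy.2
  | step i x h ih =>
    have hc : Filter.Tendsto (fun y : ℝ => 7 * y - dg b i) (nhds ((x + dg b i) / 7)) (nhds x) := by
      have : Continuous (fun y : ℝ => 7 * y - dg b i) := by fun_prop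
      convert this.tendsto _ using 2
      ring
    filter_upwards [hc ih] with y hy
    have := VV.step i _ hy
    convert this using 1
    ring

lemma VV_sep {b : ℝ} {t : ℕ → ℝ} (hg : GoodSeq b t) {x : ℝ} (hx : VV b x) :
    ∀ (y : ℝ) (_ : VV b y) (n : ℕ), x - y ≠ t n := by
  have h0 : 0 ≤ b := by linarith [hg.2.1]
  have h1 : b ≤ 1 := by linarith [hg.2.2.1]
  induction hx with
  | base x hx1 hx2 =>
    intro y hy n h
    have := VV_mem h0 h1 hy
    have h3 := hg.abs_ge n
    rw [le_abs] at h3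
    rcases h3 with h3 | h3 <;> linarith [this.1, this.2]
  | step i x hx ih =>
    intro y hy n h
    have h3 := hg.abs_ge n
    rw [le_abs] at h3
    have hm := VV_mem h0 h1 (VV.step i x hx)
    cases hy with
    | base _ hy1 hy2 => rcases h3 with h3 | h3 <;> linarith [hm.1, hm.2]
    | step j y hy =>
      have e : x - y = 7 * t n + (dg b j - dg b i) := by rw [← h]; ring
      rcases step hg n i j with h' | h'
      · exact ih y hy (n+1) (e.trans h')
      · rw [← e, le_abs] at h'
        have hx' := VV_mem h0 h1 hx
        have hy' := VV_mem h0 h1 hy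
        rcases h' with h' | h' <;> linarith [hx'.1, hx'.2, hy'.1, hy'.2]

lemma osc {b : ℝ} {t : ℕ → ℝ} (hg : GoodSeq b t) : OSC1 (b / 7) := by
  have h0 : 0 ≤ b := by linarith [hg.2.1]
  have h1 : b ≤ 1 := by linarith [hg.2.2.1]
  refine ⟨{x | VV b x}, ⟨9 / 20, VV.base _ (by norm_num) (by norm_num)⟩, VV_open b, ?_, ?_⟩
  · rintro i _ ⟨x, hx, rfl⟩
    rw [S1_eq]
    exact VV.step i x hx
  · intro i j hij
    rw [Set.eq_empty_iff_forall_notMem]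
    rintro _ ⟨⟨x, hx, rfl⟩, ⟨y, hy, hxy⟩⟩
    rw [S1_eq, S1_eq] at hxy
    have e : x - y = dg b j - dg b i := by linarith
    rcases first_step hg i j hij with h' | h' | h'
    · exact VV_sep hg hx y hy 0 (e.trans h')
    · exact VV_sep hg hy x hx 0 (by linarith)
    · rw [← e, le_abs] at h'
      have hx' := VV_mem h0 h1 hx
      have hy' := VV_mem h0 h1 hy
      rcases h' with h' | h' <;> linarith [hx'.1, hx'.2, hy'.1, hy'.2]

lemma not_oscco {b : ℝ} {t : ℕ → ℝ} (hg : GoodSeq b t) : ¬ OSCco1 (b / 7) := by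
  have h0 : 5 / 8 ≤ b := hg.2.1
  have h1 : b ≤ 37 / 55 := hg.2.2.1
  rintro ⟨-, h⟩
  have := h 0 1 (by decide)
  rw [Set.eq_empty_iff_forall_notMem] at this
  apply this (((1 + b) / 2) / 7)
  refine ⟨⟨(1 + b) / 2, ⟨by linarith, by linarith⟩, ?_⟩, ⟨(1 - b) / 2, ⟨by linarith, by linarith⟩, ?_⟩⟩
  · simp [S1]
  · simp [S1]; ring

lemma words {b : ℝ} {t : ℕ → ℝ} (hg : GoodSeq b t) (n : ℕ) :
    ∃ σ τ : List (Fin 3), τ.length = σ.length ∧ Nw b τ - Nw b σ = t n := by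
  induction n with
  | zero => exact ⟨[0], [1], rfl, by simp [Nw_cons, Nw_nil, dg, hg.1]⟩
  | succ n ih =>
    obtain ⟨σ, τ, hl, h⟩ := ih
    have key : ∃ i j : Fin 3, t (n+1) = 7 * t n + (dg b j - dg b i) := by
      rcases hg.2.2.2 n with h | h | h | h
      · exact ⟨2, 0, by rw [h.2]; simp [dg]; ring⟩
      · exact ⟨2, 1, by rw [h.2.2]; simp [dg]; ring⟩
      · exact ⟨0, 2, by rw [h.2]; simp [dg]⟩
      · exact ⟨1, 2, by rw [h.2.2]; simp [dg]; ring⟩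
    obtain ⟨i, j, e⟩ := key
    refine ⟨σ ++ [i], τ ++ [j], by simp [hl], ?_⟩
    rw [Nw_snoc, Nw_snoc, e, ← h]; ring

lemma not_ftc {b : ℝ} {t : ℕ → ℝ} (hg : GoodSeq b t) (hinj : Function.Injective t)
    (ht : ∀ n, |t n| < 1) : ¬ FTCco1 (b / 7) := by
  intro hf
  have hfin : (⋃₀ (Set.range (Ntype1 (b / 7)))).Finite := by
    apply Set.Finite.sUnion hf
    rintro _ ⟨σ, rfl⟩
    apply ((List.finite_length_eq (Fin 3) σ.length).image (amt1 (b / 7) σ)).subset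
    rintro _ ⟨τ, h1, -, rfl⟩
    exact ⟨τ, h1, rfl⟩
  apply Set.infinite_range_of_injective hinj
  apply hfin.subset
  rintro _ ⟨n, rfl⟩
  obtain ⟨σ, τ, hl, h⟩ := words hg n
  have hn := abs_lt.1 (ht n)
  refine ⟨_, ⟨σ, rfl⟩, τ, hl, ?_, ?_⟩
  · refine ⟨Sw1 (b / 7) σ ((1 + t n) / 2), ⟨_, ⟨by linarith [hn.1], by linarith [hn.2]⟩, rfl⟩,
      ⟨(1 - t n) / 2, ⟨by linarith [hn.2], by linarith [hn.1]⟩, ?_⟩⟩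
    have e1 := Sw1_apply b σ ((1 + t n) / 2)
    have e2 := Sw1_apply b τ ((1 - t n) / 2)
    have h7 : (7 : ℝ) ^ σ.length ≠ 0 := by positivity
    apply mul_left_cancel₀ h7
    rw [e1, ← hl, e2]; linarith
  · rw [amt_eq _ _ _ hl.symm, h]

/-! construction of the sequence -/

lemma exists_irr : ∃ f : ℕ → Bool, f 0 = true ∧ f 1 = false ∧
    Irrational (Cardinal.cantorFunction (1 / 7) f) := by
  have h3 : Cardinal.mk (ℕ → Bool) = Cardinal.continuum := by simp
  by_contra! hcon
  let g : (ℕ → Bool) → (ℕ → Bool) := fun f n =>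
    match n with
    | 0 => true
    | 1 => false
    | (k+2) => f k
  have hg : Function.Injective g := by
    intro f f' h
    funext k
    exact congrFun h (k+2)
  have hr : ∀ f, ∃ q : ℚ, (q : ℝ) = Cardinal.cantorFunction (1 / 7) (g f) := by
    intro f
    have := hcon (g f) rfl rfl
    simpa [Irrational] using this
  choose q hq using hr
  have hqi : Function.Injective q := by
    intro f f' h
    apply hg
    apply Cardinal.cantorFunction_injective (c := 1 / 7) (by norm_num) (by norm_num)
    rw [← hq, ← hq, h]
  have : Countable (ℕ → Bool) := hqi.countable
  have h2 := Cardinal.mk_le_aleph0 (α := ℕ → Bool)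
  rw [h3] at h2
  exact absurd h2 (not_le.2 Cardinal.aleph0_lt_continuum)

lemma cantor_bd (f : ℕ → Bool) : 0 ≤ Cardinal.cantorFunction (1 / 7) f ∧
    Cardinal.cantorFunction (1 / 7) f ≤ 7 / 6 := by
  constructor
  · apply tsum_nonneg
    intro n
    exact Cardinal.cantorFunctionAux_nonneg (by norm_num)
  · have h : Cardinal.cantorFunction (1 / 7) f ≤ Cardinal.cantorFunction (1 / 7) (fun _ => true) :=
      Cardinal.cantorFunction_le (by norm_num) (by norm_num) (fun _ _ => rfl)
    refine h.trans (le_of_eq ?_)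
    have := Cardinal.cantorFunction_succ (c := 1 / 7) (fun _ => true) (by norm_num) (by norm_num)
    simp only [cond_true] at this
    linarith

lemma exists_X : ∃ (X : ℕ → ℝ) (u : ℕ → ℤ), Irrational (X 0) ∧ u 0 = 1 ∧ u 1 = -1 ∧
    (∀ n, u n = 1 ∨ u n = -1) ∧ (∀ n, -(1/6) ≤ X n ∧ X n ≤ 1/6) ∧
    ∀ n, X (n+1) = 7 * X n - u n := by
  obtain ⟨f, h0, h1, hf⟩ := exists_irr
  refine ⟨fun n => 2 / 7 * Cardinal.cantorFunction (1 / 7) (fun k => f (k + n)) - 1 / 6,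
    fun n => cond (f n) 1 (-1), ?_, by simp [h0], by simp [h1], ?_, ?_, ?_⟩
  · intro ⟨q, hq⟩
    apply hf
    refine ⟨(q + 1 / 6) * 7 / 2, ?_⟩
    simp only [add_zero] at hq
    push_cast
    rw [hq]; ring
  · intro n; cases h : f n <;> simp [h]
  · intro n
    have := cantor_bd (fun k => f (k + n))
    constructor <;> linarith [this.1, this.2]
  · intro n
    have := Cardinal.cantorFunction_succ (c := 1 / 7) (fun k => f (k + n)) (by norm_num) (by norm_num)
    have e : (fun k => f (k + (n + 1))) = (fun k => f (k + 1 + n)) := by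
      funext k; congr 1; ring
    simp only [zero_add] at this
    beta_reduce
    rw [e, this]
    cases f n <;> simp <;> ring

lemma exists_seq : ∃ (b : ℝ) (t : ℕ → ℝ), GoodSeq b t ∧ Function.Injective t ∧ ∀ n, |t n| < 1 := by
  obtain ⟨X, u, hirr, hu0, hu1, hu, hX, hs⟩ := exists_X
  have s0 := hs 0
  have s1 := hs 1
  norm_num [hu0, hu1] at s0 s1
  have hX0 : 5 / 42 ≤ X 0 ∧ X 0 ≤ 37 / 294 := by
    constructor <;> linarith [(hX 2).1, (hX 2).2]
  obtain ⟨b, hb⟩ : ∃ b, b = 4 * X 0 / (1 - 2 * X 0) := ⟨_, rfl⟩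
  have hpos : 0 < 1 - 2 * X 0 := by linarith [hX0.2]
  have hb' : b * (1 - 2 * X 0) = 4 * X 0 := by rw [hb, div_mul_cancel₀ _ hpos.ne']
  have hb1 : 5 / 8 ≤ b := by
    rw [hb, le_div_iff₀ hpos]; linarith [hX0.1]
  have hb2 : b ≤ 37 / 55 := by
    rw [hb, div_le_iff₀ hpos]; linarith [hX0.2]
  have hbirr : Irrational b := by
    rintro ⟨q, hq⟩
    apply hirr
    refine ⟨q / (4 + 2 * q), ?_⟩
    push_cast
    rw [hq, div_eq_iff (by linarith)]
    linarith
  let t : ℕ → ℝ := fun n => (6 + 3 * b) * X n - b / 2 * u n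
  have ht : ∀ n, t n = (6 + 3 * b) * X n - b / 2 * u n := fun _ => rfl
  have ht0 : t 0 = b := by rw [ht, hu0]; push_cast; linarith
  have hrec : ∀ n, t (n+1) = 7 * t n - 6 * u n + b / 2 * (u n - u (n+1)) := by
    intro n; rw [ht, ht, hs]; ring
  have hX' : ∀ n, X n = (u n + (u (n+1) + X (n+2)) / 7) / 7 := by
    intro n; have := hs n; have := hs (n+1); linarith
  have hpb : 0 ≤ 6 + 3 * b := by linarith
  have hgood : GoodSeq b t := by
    refine ⟨ht0, hb1, hb2, ?_⟩
    intro n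
    rw [hrec]
    have hn := ht n
    rw [hX' n] at hn
    have m1 := mul_le_mul_of_nonneg_left (hX (n+2)).1 hpb
    have m2 := mul_le_mul_of_nonneg_left (hX (n+2)).2 hpb
    rcases hu n with h | h <;> rcases hu (n+1) with h' | h' <;> rw [h, h'] at hn ⊢ <;>
      push_cast at hn ⊢
    · left; constructor <;> linarith
    · right; left; refine ⟨?_, ?_, ?_⟩ <;> linarith
    · right; right; right; refine ⟨?_, ?_, ?_⟩ <;> linarith
    · right; right; left; constructor <;> linarith
  have hpq : ∃ p q : ℕ → ℤ, (∀ n, t n = p n + q n * b) ∧ (∀ n, 1 ≤ |q n|) ∧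
      ∀ n, |q n| < |q (n+1)| := by
    have hc : ∀ n, ∃ c : ℤ, |c| ≤ 1 ∧ u n - u (n+1) = 2 * c := by
      intro n
      rcases hu n with h | h <;> rcases hu (n+1) with h' | h' <;> rw [h, h']
      · exact ⟨0, by norm_num⟩
      · exact ⟨1, by norm_num⟩
      · exact ⟨-1, by norm_num⟩
      · exact ⟨0, by norm_num⟩
    choose c hc1 hc2 using hc
    let q : ℕ → ℤ := fun n => Nat.rec 1 (fun k r => 7 * r + c k) n
    let p : ℕ → ℤ := fun n => Nat.rec 0 (fun k r => 7 * r - 6 * u k) n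
    have hq : ∀ n, q (n+1) = 7 * q n + c n := fun _ => rfl
    have hp : ∀ n, p (n+1) = 7 * p n - 6 * u n := fun _ => rfl
    have hge : ∀ n, 1 ≤ |q n| := by
      intro n
      induction n with
      | zero => simp [q]
      | succ n ih =>
        have h1 := hc1 n
        rw [hq]
        grind
    refine ⟨p, q, ?_, hge, ?_⟩
    · intro n
      induction n with
      | zero => simp [p, q, ht0]
      | succ n ih =>
        have : (u n : ℝ) - u (n+1) = 2 * c n := by exact_mod_cast hc2 n
        rw [hrec, hq, hp, ih, this]; push_cast; ring
    · intro n
      have h1 := hc1 n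
      have h2 := hge n
      rw [hq]
      grind
  obtain ⟨p, q, h1, h2, h3⟩ := hpq
  have hmono : StrictMono (fun n => |q n|) := strictMono_nat_of_lt_succ h3
  have hlin : ∀ P Q : ℤ, (P : ℝ) + Q * b = 0 → Q = 0 := by
    intro P Q h
    by_contra hQ
    apply hbirr
    refine ⟨-P / Q, ?_⟩
    have : (Q : ℝ) ≠ 0 := by exact_mod_cast hQ
    push_cast
    rw [div_eq_iff this]; linarith
  refine ⟨b, t, hgood, ?_, ?_⟩
  · intro m n h
    rw [h1, h1] at h
    have := hlin (p m - p n) (q m - q n) (by push_cast; linarith)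
    apply hmono.injective
    have : q m = q n := by linarith
    simp [this]
  · intro n
    have hle : |t n| ≤ 1 := by
      have m1 := mul_le_mul_of_nonneg_left (hX (n+1)).1 hpb
      have m2 := mul_le_mul_of_nonneg_left (hX (n+1)).2 hpb
      have hn := ht n
      have hx : X n = (u n + X (n+1)) / 7 := by have := hs n; linarith
      rw [hx] at hn
      rw [abs_le]
      rcases hu n with h | h <;> rw [h] at hn <;> push_cast at hn <;>
        constructor <;> linarith
    have hq0 : q n ≠ 0 := by
      intro h; have := h2 n; rw [h] at this; norm_num at this
    refine lt_of_le_of_ne hle ?_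
    intro h
    rcases (abs_eq (by norm_num)).1 h with h | h
    · exact hq0 (hlin (p n - 1) (q n) (by have := h1 n; push_cast; linarith))
    · exact hq0 (hlin (p n + 1) (q n) (by have := h1 n; push_cast; linarith))

theorem stmt1 : ∃ a ∈ Ioo (0 : ℝ) (1 / 7),
    WSP1 a ∧ OSC1 a ∧ ¬ OSCco1 a ∧ ¬ FTCco1 a := by
  obtain ⟨b, t, hg, hinj, hlt⟩ := exists_seq
  have h0 : 5 / 8 ≤ b := hg.2.1
  have h1 : b ≤ 37 / 55 := hg.2.2.1
  exact ⟨b / 7, ⟨by linarith, by linarith⟩, wsp hg, osc hg, not_oscco hg, not_ftc hg hinj hlt⟩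
end

section
/- There exists a real number a ∈ (0, 1/7) such that the iterated function system 𝒮₁(a) = {x/7, x/7 + a, x/7 + 6/7} does not satisfy the convex finite type condition, and moreover the weak separation property holds quantitatively with constant 4/7: for every k ≥ 0 and all words σ, τ of length k over {1,2,3}, either a_{σ,τ} = 0 or |a_{σ,τ}| ≥ 4/7. -/
open Set

theorem Sw1_affine (a : ℝ) (σ : List (Fin 3)) (x : ℝ) :
    Sw1 a σ x = Sw1 a σ 0 + x / 7 ^ σ.length := by
  induction σ with
  | nil => simp [Sw1]
  | cons i σ ih =>
    simp only [Sw1, Function.comp, List.length_cons]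
    rw [ih]
    fin_cases i <;> simp [S1, pow_succ] <;> ring

theorem Sw1_append (a : ℝ) (σ : List (Fin 3)) (i : Fin 3) (x : ℝ) :
    Sw1 a (σ ++ [i]) x = Sw1 a σ (S1 a i x) := by
  induction σ with
  | nil => simp [Sw1]
  | cons j σ ih => simp [Sw1, ih]

theorem amt1_append (a : ℝ) (σ τ : List (Fin 3)) (h : σ.length = τ.length) (i j : Fin 3) :
    amt1 a (σ ++ [i]) (τ ++ [j]) = 7 * amt1 a σ τ + 7 * (S1 a j 0 - S1 a i 0) := by
  unfold amt1
  rw [Sw1_append, Sw1_append, Sw1_affine a σ (S1 a i 0), Sw1_affine a τ (S1 a j 0), ← h]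
  simp only [List.length_append, List.length_singleton, pow_succ]
  have : (7 : ℝ) ^ σ.length ≠ 0 := by positivity
  field_simp
  ring

theorem amt1_swap (a : ℝ) (σ τ : List (Fin 3)) (h : σ.length = τ.length) :
    amt1 a τ σ = - amt1 a σ τ := by
  unfold amt1
  rw [h]; ring

/-- Digit sequence: indicator of the squares. -/
noncomputable def eps (n : ℕ) : ℝ := if IsSquare n then 1 else 0

/-- Alternating sign after each nonzero digit. -/
noncomputable def sg : ℕ → ℝ
  | 0 => 1
  | n + 1 => sg n * (1 - 2 * eps n)

theorem eps_cases (n : ℕ) : eps n = 0 ∨ eps n = 1 := by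
  unfold eps; split_ifs <;> simp

theorem sg_sq (n : ℕ) : sg n * sg n = 1 := by
  induction n with
  | zero => simp [sg]
  | succ n ih =>
    simp only [sg]
    rcases eps_cases n with h | h <;> rw [h] <;> linarith

theorem sg_abs (n : ℕ) : |sg n| = 1 := by
  have := sg_sq n
  rcases mul_self_eq_one_iff.1 this with h | h <;> simp [h]

/-- Unnormalised tail values. -/
noncomputable def gg (n : ℕ) : ℝ := ∑' j : ℕ, eps (n + j) * sg (n + j) * (1 / 7) ^ (j + 1)

theorem term_bound (n j : ℕ) :
    ‖eps (n + j) * sg (n + j) * (1 / 7) ^ (j + 1)‖ ≤ (1 / 7) * (1 / 7 : ℝ) ^ j := by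
  rw [Real.norm_eq_abs, abs_mul, abs_mul, sg_abs, abs_of_pos (show (0:ℝ) < (1 / 7) ^ (j + 1) by positivity),
    pow_succ]
  have : (0:ℝ) < (1 / 7) ^ j := by positivity
  rcases eps_cases (n + j) with h | h <;> rw [h] <;> simp <;> linarith

theorem geo : HasSum (fun j : ℕ => (1 / 7) * (1 / 7 : ℝ) ^ j) (1 / 6) := by
  have := (hasSum_geometric_of_lt_one (r := (1 / 7 : ℝ)) (by norm_num) (by norm_num)).mul_left (1 / 7)
  have e : (1 / 7 : ℝ) * (1 - 1 / 7)⁻¹ = 1 / 6 := by norm_num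
  rwa [e] at this

theorem gg_summable (n : ℕ) :
    Summable fun j : ℕ => eps (n + j) * sg (n + j) * (1 / 7 : ℝ) ^ (j + 1) :=
  Summable.of_norm_bounded geo.summable (term_bound n)

theorem gg_bound (n : ℕ) : |gg n| ≤ 1 / 6 :=
  tsum_of_norm_bounded geo (term_bound n)

theorem gg_rec (n : ℕ) : gg n = eps n * sg n / 7 + gg (n + 1) / 7 := by
  unfold gg
  rw [(gg_summable n).tsum_eq_zero_add, ← tsum_div_const]
  congr 1
  · simp; ring
  · apply tsum_congr
    intro j
    rw [show n + (j + 1) = n + 1 + j by ring, pow_succ]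
    ring

/-- Normalised tail values. -/
noncomputable def ff (n : ℕ) : ℝ := sg n * gg n

theorem ff_rec (n : ℕ) : ff n = eps n / 7 + (1 - 2 * eps n) * ff (n + 1) / 7 := by
  have h := sg_sq n
  unfold ff
  rw [gg_rec n]
  simp only [sg]
  rcases eps_cases n with h1 | h1 <;> rw [h1]
  · ring
  · linear_combination h / 7

theorem ff_rec0 (n : ℕ) (h : eps n = 0) : 7 * ff n = ff (n + 1) := by
  rw [ff_rec n, h]; ring

theorem ff_rec1 (n : ℕ) (h : eps n = 1) : 7 * ff n = 1 - ff (n + 1) := by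
  rw [ff_rec n, h]; ring

theorem ff_bound (n : ℕ) : |ff n| ≤ 1 / 6 := by
  unfold ff
  rw [abs_mul, sg_abs, one_mul]
  exact gg_bound n

theorem ff_pos (n : ℕ) : 0 < ff n := by
  have key : ∀ j n : ℕ, eps (n + j) = 1 → 0 < ff n := by
    intro j
    induction j with
    | zero =>
      intro n h
      have := ff_rec1 n h
      have := abs_le.1 (ff_bound (n + 1))
      linarith
    | succ j ih =>
      intro n h
      rcases eps_cases n with h1 | h1
      · have := ff_rec0 n h1
        have := ih (n + 1) (by rw [← h]; congr 1; ring)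
        linarith
      · have := ff_rec1 n h1
        have := abs_le.1 (ff_bound (n + 1))
        linarith
  have hle : n ≤ n * n := Nat.le_mul_self n
  apply key (n * n - n) n
  rw [Nat.add_sub_cancel' hle]
  simp [eps]

theorem ff_le (n : ℕ) : ff n ≤ 1 / 7 := by
  have h1 := ff_pos (n + 1)
  have h2 := abs_le.1 (ff_bound (n + 1))
  rcases eps_cases n with h | h
  · have := ff_rec0 n h; linarith
  · have := ff_rec1 n h; linarith

theorem ff_small (m : ℕ) : ff (m * m + 1) ≤ (1 / 7) ^ m := by
  have key : ∀ j, j ≤ m → 7 ^ j * ff (m * m + 1) = ff (m * m + 1 + j) := by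
    intro j
    induction j with
    | zero => simp
    | succ j ih =>
      intro hj
      have h0 : eps (m * m + 1 + j) = 0 := by
        unfold eps
        rw [if_neg]
        rintro ⟨r, hr⟩
        have h1 : m < r := by
          by_contra hc
          have := Nat.mul_le_mul (not_lt.1 hc) (not_lt.1 hc)
          omega
        have := Nat.mul_le_mul (Nat.succ_le_of_lt h1) (Nat.succ_le_of_lt h1)
        have : m.succ * m.succ = m * m + 2 * m + 1 := by simp [Nat.succ_eq_add_one]; ring
        omega
      have := ff_rec0 _ h0
      rw [pow_succ, ← add_assoc, ← this, ← ih (by omega)]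
      ring
  have h := key m le_rfl
  have h2 := ff_le (m * m + 1 + m)
  have h3 : (0:ℝ) < 7 ^ m := by positivity
  rw [one_div, inv_pow, ← one_div, le_div_iff₀ h3]
  linarith

theorem ff_infinite : ¬ (Set.range ff).Finite := by
  intro h
  obtain ⟨x, ⟨n, rfl⟩, hx⟩ := h.exists_minimal (Set.range_nonempty ff)
  obtain ⟨m, hm⟩ := exists_pow_lt_of_lt_one (ff_pos n) (show (1 / 7 : ℝ) < 1 by norm_num)
  have h1 := ff_small m
  have := hx (Set.mem_range_self (m * m + 1)) (by linarith)
  linarith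

/-- The constant `3 - c`. -/
noncomputable def KK : ℝ := 3 / (1 + ff 0)

theorem KK_eq : KK * ff 0 = 3 - KK := by
  have := ff_pos 0
  unfold KK
  field_simp
  ring

theorem KK_ge : 21 / 8 ≤ KK := by
  have := ff_pos 0
  have := ff_le 0
  unfold KK
  rw [le_div_iff₀ (by linarith)]
  linarith

theorem KK_lt : KK < 3 := by
  have := KK_eq
  have := mul_pos (show 0 < KK by linarith [KK_ge]) (ff_pos 0)
  linarith

/-- The parameter. -/
noncomputable def aa : ℝ := (KK - 2) / 7

/-- Invariant set of translation amounts. -/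
def VV_s3 (x : ℝ) : Prop := x = 0 ∨ 1 ≤ |x| ∨ ∃ n, |x| = 1 - KK * ff n

theorem VV_neg {x : ℝ} (h : VV_s3 x) : VV_s3 (-x) := by
  simpa [VV_s3] using h

theorem Kf_bounds (n : ℕ) : 0 < KK * ff n ∧ KK * ff n ≤ 3 / 7 := by
  have h1 := KK_ge
  have h2 := KK_lt
  have h3 := ff_pos n
  have h4 := ff_le n
  constructor
  · exact mul_pos (by linarith) h3
  · nlinarith

/-- Admissible increments. -/
def EE (e : ℝ) : Prop :=
  e = 0 ∨ e = 6 ∨ e = -6 ∨ e = KK - 2 ∨ e = -(KK - 2) ∨ e = 6 - (KK - 2) ∨ e = -(6 - (KK - 2))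

theorem EE_neg {e : ℝ} (h : EE e) : EE (-e) := by
  unfold EE at *
  rcases h with h | h | h | h | h | h | h <;> subst h <;> simp

theorem EE_le {e : ℝ} (h : EE e) : |e| ≤ 6 := by
  have h1 := KK_ge
  have h2 := KK_lt
  unfold EE at *
  rw [abs_le]
  rcases h with h | h | h | h | h | h | h <;> subst h <;> constructor <;> linarith

theorem VV_big {x : ℝ} (h : 1 ≤ x) : VV_s3 x := Or.inr (Or.inl (h.trans (le_abs_self x)))

theorem VV_step_pos {x e : ℝ} (hx : 0 ≤ x) (h : VV_s3 x) (he : EE e) : VV_s3 (7 * x + e) := by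
  have h1 := KK_ge
  have h2 := KK_lt
  have hle := abs_le.1 (EE_le he)
  rcases h with h | h | ⟨n, h⟩
  · subst h
    rw [mul_zero, zero_add]
    have hK : VV_s3 (KK - 2) := by
      right; right
      refine ⟨0, ?_⟩
      rw [KK_eq, abs_of_pos (by linarith)]
      ring
    rcases he with h | h | h | h | h | h | h <;> subst h
    · exact Or.inl rfl
    · exact VV_big (by norm_num)
    · exact VV_neg (VV_big (by norm_num))
    · exact hK
    · exact VV_neg hK
    · exact VV_big (by linarith)
    · exact VV_neg (VV_big (by linarith))
  · rw [abs_of_nonneg hx] at h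
    exact VV_big (by linarith)
  · rw [abs_of_nonneg hx] at h
    obtain ⟨b1, b2⟩ := Kf_bounds n
    obtain ⟨b3, b4⟩ := Kf_bounds (n + 1)
    rcases he with he | he | he | he | he | he | he
    · exact VV_big (by linarith)
    · exact VV_big (by linarith)
    · rcases eps_cases n with h0 | h0
      · have : KK * (7 * ff n) = KK * ff (n + 1) := by rw [ff_rec0 n h0]
        have e1 : 7 * x + e = 1 - KK * ff (n + 1) := by rw [h, he]; linarith
        rw [e1]
        right; right
        exact ⟨n + 1, abs_of_pos (by linarith)⟩
      · have : KK * (7 * ff n) = KK * (1 - ff (n + 1)) := by rw [ff_rec1 n h0]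
        have := VV_neg (VV_big (x := -(7 * x + e)) (by rw [h, he]; linarith))
        simpa using this
    · exact VV_big (by linarith)
    · exact VV_big (by linarith)
    · exact VV_big (by linarith)
    · rcases eps_cases n with h0 | h0
      · have : KK * (7 * ff n) = KK * ff (n + 1) := by rw [ff_rec0 n h0]
        exact VV_big (by linarith)
      · have : KK * (7 * ff n) = KK * (1 - ff (n + 1)) := by rw [ff_rec1 n h0]
        have e1 : 7 * x + e = -(1 - KK * ff (n + 1)) := by rw [h, he]; linarith
        rw [e1]
        right; right
        exact ⟨n + 1, by rw [abs_neg, abs_of_pos (by linarith)]⟩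

theorem VV_step {x e : ℝ} (h : VV_s3 x) (he : EE e) : VV_s3 (7 * x + e) := by
  rcases le_total 0 x with hx | hx
  · exact VV_step_pos hx h he
  · have := VV_neg (VV_step_pos (neg_nonneg.2 hx) (VV_neg h) (EE_neg he))
    convert this using 1
    ring

theorem EE_diff (i j : Fin 3) : EE (7 * (S1 aa j 0 - S1 aa i 0)) := by
  unfold EE
  fin_cases i <;> fin_cases j <;> simp [S1, aa] <;> ring_nf <;> simp

theorem VV_amt (k : ℕ) : ∀ σ τ : List (Fin 3), σ.length = k → τ.length = k →
    VV_s3 (amt1 aa σ τ) := by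
  induction k with
  | zero =>
    intro σ τ h1 h2
    rw [List.length_eq_zero_iff] at h1 h2
    subst h1; subst h2
    left; simp [amt1]
  | succ k ih =>
    intro σ τ h1 h2
    rcases List.eq_nil_or_concat σ with rfl | ⟨σ', i, rfl⟩
    · simp at h1
    rcases List.eq_nil_or_concat τ with rfl | ⟨τ', j, rfl⟩
    · simp at h2
    simp at h1 h2
    rw [List.concat_eq_append, List.concat_eq_append, amt1_append _ _ _ (h1.trans h2.symm)]
    exact VV_step (ih _ _ h1 h2) (EE_diff i j)

theorem reach (n : ℕ) : ∃ σ τ : List (Fin 3), σ.length = τ.length ∧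
    amt1 aa σ τ = 1 - KK * ff n := by
  induction n with
  | zero =>
    refine ⟨[0], [1], rfl, ?_⟩
    rw [KK_eq]
    simp [amt1, Sw1, S1, aa]
    ring
  | succ n ih =>
    obtain ⟨σ, τ, hl, h⟩ := ih
    rcases eps_cases n with h0 | h0
    · refine ⟨σ ++ [2], τ ++ [0], by simp [hl], ?_⟩
      rw [amt1_append _ _ _ hl, h, ← ff_rec0 n h0]
      simp [S1]
      ring
    · refine ⟨τ ++ [1], σ ++ [2], by simp [hl], ?_⟩
      rw [amt1_append _ _ _ hl.symm, amt1_swap _ _ _ hl, h,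
        show ff (n + 1) = 1 - 7 * ff n by linarith [ff_rec1 n h0]]
      simp [S1, aa]
      ring

theorem Ntype1_finite (a : ℝ) (σ : List (Fin 3)) : (Ntype1 a σ).Finite := by
  have h : {τ : List (Fin 3) | τ.length = σ.length}.Finite := List.finite_length_eq _ _
  refine (h.image (amt1 a σ)).subset ?_
  rintro t ⟨τ, h1, -, rfl⟩
  exact ⟨τ, h1, rfl⟩

theorem mem_Ntype1 (a : ℝ) (σ τ : List (Fin 3)) (hl : σ.length = τ.length)
    (h0 : 0 < amt1 a σ τ) (h1 : amt1 a σ τ < 1) : amt1 a σ τ ∈ Ntype1 a σ := by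
  refine ⟨τ, hl.symm, ?_, rfl⟩
  set x := amt1 a σ τ with hx
  refine ⟨Sw1 a σ ((1 + x) / 2), ⟨_, ⟨by linarith, by linarith⟩, rfl⟩,
    ⟨(1 - x) / 2, ⟨by linarith, by linarith⟩, ?_⟩⟩
  rw [Sw1_affine a τ, Sw1_affine a σ, ← hl]
  have h7 : (7 : ℝ) ^ σ.length ≠ 0 := by positivity
  unfold amt1 at hx
  field_simp
  linarith

theorem not_FTC : ¬ FTCco1 aa := by
  intro h
  have hU : (⋃₀ Set.range (Ntype1 aa)).Finite := by
    apply Set.Finite.sUnion h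
    rintro _ ⟨σ, rfl⟩
    exact Ntype1_finite _ _
  apply ff_infinite
  refine (hU.image (fun x => (1 - x) / KK)).subset ?_
  rintro _ ⟨n, rfl⟩
  obtain ⟨σ, τ, hl, hv⟩ := reach n
  obtain ⟨b1, b2⟩ := Kf_bounds n
  refine ⟨amt1 aa σ τ, ⟨_, ⟨σ, rfl⟩, mem_Ntype1 _ _ _ hl (by linarith) (by linarith)⟩, ?_⟩
  have : KK ≠ 0 := by linarith [KK_ge]
  simp only [hv]
  field_simp
  ring

theorem stmt3 : ∃ a ∈ Ioo (0 : ℝ) (1 / 7),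
    ¬ FTCco1 a ∧
    ∀ σ τ : List (Fin 3), σ.length = τ.length →
      amt1 a σ τ = 0 ∨ 4 / 7 ≤ |amt1 a σ τ| := by
  have h1 := KK_ge
  have h2 := KK_lt
  refine ⟨aa, ⟨by unfold aa; linarith, by unfold aa; linarith⟩, not_FTC, ?_⟩
  intro σ τ h
  rcases VV_amt _ σ τ rfl h.symm with h | h | ⟨n, h⟩
  · exact Or.inl h
  · right; linarith
  · right; linarith [(Kf_bounds n).2]
end
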